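/- The function E(p) := c_{2p}/c_p² + 4 log 2 is monotone increasing on the interval (1,2], satisfies lim_{p→1+} E(p) = 4 log 2, and satisfies 4 log 2 ≤ E(p) ≤ 10 log 2 for all p ∈ (1,2], where c_p := a_p K_{p/2}/√2, a_p := 2^{p/2} Γ((p+1)/2)/√π, and K_q := ∫_0^∞ t^q H(t) dt with H(t) := 4 e^{−t} √(e^{−t} sinh t) / (π (1 − e^{−2t})²). -/

import Mathlib

/-!
The function `p ↦ c p` is, up to a constant, a product of `2 ^ (p / 2)`, of `Γ ((p + 1) / 2)` and
of the moment `K (p / 2)` of the positive weight `H`, each log-convex in `p`; so `m = log c` is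
convex on `(1, ∞)` (`convexOn_log_c`). Comparing the slopes of `m` on `[p, p']` and `[2p, 2p']`
shows that `m (2p) - 2 m p`, hence `E`, is increasing (`ratio_mono`).

The limit at `1` holds because `c (2p)` stays bounded, being continuous at `p = 1`, while
`K (p / 2) ≥ 2 κ / (p - 1)` since `H` behaves like `t ^ (-3/2)` at the origin (`K_lower`).

The lower bound is positivity of `c`. By monotonicity the upper bound is the value `E 2 = 10 log 2`:
the substitution `t = -log (sin x)` gives `K q = (2√2/π) ∫ (-log sin x)^q / cos² x` over
`(0, π/2)`, and an integration by parts with `tan` gives `K 1 = √2` and, from Euler's integral of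
`log sin`, `K 2 = 2√2 log 2`.
-/

open Real MeasureTheory Set Filter

/-- `H(t) = 4 e^{−t} √(e^{−t} sinh t) / (π (1 − e^{−2t})²)`. -/
noncomputable def H (t : ℝ) : ℝ :=
  4 * Real.exp (-t) * Real.sqrt (Real.exp (-t) * Real.sinh t) /
    (π * (1 - Real.exp (-2 * t)) ^ 2)

/-- `K_q = ∫₀^∞ t^q H(t) dt`. -/
noncomputable def K (q : ℝ) : ℝ := ∫ t in Ioi (0 : ℝ), t ^ q * H t

/-- `a_p = 2^{p/2} Γ((p+1)/2)/√π`, the p-th absolute moment of a standard Gaussian. -/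
noncomputable def a (p : ℝ) : ℝ := 2 ^ (p / 2) * Real.Gamma ((p + 1) / 2) / Real.sqrt π

/-- `c_p = a_p K_{p/2} / √2`. -/
noncomputable def c (p : ℝ) : ℝ := a p * K (p / 2) / Real.sqrt 2

/-- `E(p) = c_{2p}/c_p² + 4 log 2`. -/
noncomputable def E (p : ℝ) : ℝ := c (2 * p) / c p ^ 2 + 4 * Real.log 2

/-! ### The weight `H` and its moments -/

lemma one_sub_exp_pos {t : ℝ} (ht : 0 < t) : 0 < 1 - exp (-2 * t) := by
  have : exp (-2 * t) < 1 := exp_lt_one_iff.2 (by linarith)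
  linarith

/-- Since `e^{-t} sinh t = (1 - e^{-2t}) / 2`, the weight is `(2√2/π) e^{-t} (1 - e^{-2t})^{-3/2}`. -/
lemma H_eq {t : ℝ} (ht : 0 < t) :
    H t = 2 * √2 / π * (exp (-t) * (1 - exp (-2 * t)) ^ (-(3 / 2) : ℝ)) := by
  have hw := one_sub_exp_pos ht
  have h1 : exp (-t) * sinh t = (1 - exp (-2 * t)) / 2 := by
    rw [sinh_eq, mul_div_assoc', mul_sub, ← exp_add, ← exp_add]
    ring_nf
    simp
  unfold H
  rw [h1]
  set w := 1 - exp (-2 * t)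
  have h2 : w ^ (-(3 / 2) : ℝ) = √w / w ^ 2 := by
    rw [sqrt_eq_rpow, ← rpow_natCast w 2, ← rpow_sub hw]
    norm_num
  have h3 : √2 * √2 = 2 := mul_self_sqrt (by norm_num)
  have h4 : √2 ≠ 0 := by positivity
  rw [h2, sqrt_div hw.le]
  field_simp
  linear_combination (-2 : ℝ) * h3

lemma H_pos {t : ℝ} (ht : 0 < t) : 0 < H t := by
  have := one_sub_exp_pos ht
  rw [H_eq ht]
  positivity

/-- The upper bound comes from `1 - e^{-2t} ≥ 2t / (1 + 2t)`; it is integrable against `t^q` on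
the whole half-line as soon as `q > 1/2`. -/
lemma H_le {t : ℝ} (ht : 0 < t) :
    H t ≤ 2 * √2 / π * (exp (-t) * (t ^ (-(3 / 2) : ℝ) * (1 + 2 * t) ^ 2)) := by
  rw [H_eq ht]
  have hw := one_sub_exp_pos ht
  have h1 : 2 * t / (1 + 2 * t) ≤ 1 - exp (-2 * t) := by
    have h2 : exp (-2 * t) ≤ 1 / (1 + 2 * t) := by
      rw [le_div_iff₀ (by positivity)]
      have := add_one_le_exp (2 * t)
      calc exp (-2 * t) * (1 + 2 * t) ≤ exp (-2 * t) * exp (2 * t) := by gcongr; linarith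
        _ = 1 := by rw [← exp_add]; simp
    have h3 : 2 * t / (1 + 2 * t) = 1 - 1 / (1 + 2 * t) := by field_simp; ring
    linarith
  gcongr
  calc (1 - exp (-2 * t)) ^ (-(3 / 2) : ℝ) ≤ (2 * t / (1 + 2 * t)) ^ (-(3 / 2) : ℝ) :=
        rpow_le_rpow_of_nonpos (by positivity) h1 (by norm_num)
    _ = (2 * t) ^ (-(3 / 2) : ℝ) * (1 + 2 * t) ^ (3 / 2 : ℝ) := by
        rw [div_rpow (by positivity) (by positivity), rpow_neg (by positivity : 0 ≤ 1 + 2 * t),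
          div_inv_eq_mul]
    _ ≤ t ^ (-(3 / 2) : ℝ) * (1 + 2 * t) ^ 2 := by
        gcongr ?_ * ?_
        · exact rpow_le_rpow_of_nonpos ht (by linarith) (by norm_num)
        · rw [← rpow_natCast]
          exact rpow_le_rpow_of_exponent_le (by linarith) (by norm_num)

/-- Near `0` the weight is at least a multiple of `t^{-3/2}`, because `1 - e^{-2t} ≤ 2t`. -/
lemma le_H {t : ℝ} (ht : 0 < t) (ht1 : t ≤ 1) :
    2 * √2 / π * (exp (-1) * 2 ^ (-(3 / 2) : ℝ)) * t ^ (-(3 / 2) : ℝ) ≤ H t := by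
  rw [H_eq ht, mul_assoc, mul_assoc (exp (-1)), ← mul_rpow (by norm_num) ht.le]
  have hw := one_sub_exp_pos ht
  have h1 : 1 - exp (-2 * t) ≤ 2 * t := by
    have := add_one_le_exp (-2 * t)
    linarith
  gcongr ?_ * (?_ * ?_)
  · exact exp_le_exp.2 (by linarith)
  · exact rpow_le_rpow_of_nonpos hw h1 (by norm_num)

lemma integrable_moment {q : ℝ} (hq : 1 / 2 < q) :
    IntegrableOn (fun t => t ^ q * H t) (Ioi 0) := by
  have g1 := GammaIntegral_convergent (s := q - 1 / 2) (by linarith)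
  have g2 := GammaIntegral_convergent (s := q + 1 / 2) (by linarith)
  have g3 := GammaIntegral_convergent (s := q + 3 / 2) (by linarith)
  have g := ((g1.add (g2.const_mul 4)).add (g3.const_mul 4)).const_mul (2 * √2 / π)
  refine Integrable.mono' g ?_ ?_
  · apply Measurable.aestronglyMeasurable
    unfold H
    have := measurable_sinh
    fun_prop
  · refine (ae_restrict_iff' measurableSet_Ioi).2 (ae_of_all _ fun t ht => ?_)
    have ht : 0 < t := ht
    have hH := H_pos ht
    rw [norm_of_nonneg (by positivity)]
    refine (mul_le_mul_of_nonneg_left (H_le ht) (by positivity)).trans (le_of_eq ?_)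
    simp only [Pi.add_apply]
    have e1 : t ^ (q - 1 / 2 - 1) = t ^ q * t ^ (-(3 / 2) : ℝ) := by
      rw [← rpow_add ht]; ring_nf
    have e2 : t ^ (q + 1 / 2 - 1) = t ^ q * t ^ (-(3 / 2) : ℝ) * t := by
      rw [← rpow_add ht, ← rpow_add_one ht.ne']; ring_nf
    have e3 : t ^ (q + 3 / 2 - 1) = t ^ q * t ^ (-(3 / 2) : ℝ) * t * t := by
      rw [← rpow_add ht, ← rpow_add_one ht.ne', ← rpow_add_one ht.ne']; ring_nf
    rw [e1, e2, e3]
    ring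

/-- The constant in the lower bound of `K` near the divergence at `q = 1/2`. -/
noncomputable def kappa : ℝ := 2 * √2 / π * (exp (-1) * 2 ^ (-(3 / 2) : ℝ))

lemma kappa_pos : 0 < kappa := by unfold kappa; positivity

/-- `K_q` blows up at least like `1 / (q - 1/2)`. -/
lemma K_lower {q : ℝ} (hq : 1 / 2 < q) : kappa / (q - 1 / 2) ≤ K q := by
  have hI : ∫ t in Ioc (0 : ℝ) 1, kappa * t ^ (q - 3 / 2) = kappa / (q - 1 / 2) := by
    rw [← intervalIntegral.integral_of_le zero_le_one, intervalIntegral.integral_const_mul,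
      integral_rpow (Or.inl (by linarith)), zero_rpow (by linarith), one_rpow]
    ring
  have hint : IntegrableOn (fun t : ℝ => kappa * t ^ (q - 3 / 2)) (Ioc 0 1) := by
    have := (intervalIntegral.intervalIntegrable_rpow' (a := 0) (b := 1) (r := q - 3 / 2)
      (by linarith)).const_mul kappa
    rwa [intervalIntegrable_iff_integrableOn_Ioc_of_le zero_le_one] at this
  have hm := integrable_moment hq
  rw [← hI]
  refine (setIntegral_mono_on hint (hm.mono_set Ioc_subset_Ioi_self) measurableSet_Ioc ?_).trans
    (setIntegral_mono_set hm ?_ (Eventually.of_forall Ioc_subset_Ioi_self))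
  · intro t ht
    calc kappa * t ^ (q - 3 / 2) = t ^ q * (kappa * t ^ (-(3 / 2) : ℝ)) := by
          rw [show q - 3 / 2 = q + -(3 / 2) by ring, rpow_add ht.1]; ring
      _ ≤ t ^ q * H t :=
          mul_le_mul_of_nonneg_left (le_H ht.1 ht.2) (rpow_nonneg ht.1.le _)
  · refine (ae_restrict_iff' measurableSet_Ioi).2 (ae_of_all _ fun t ht => ?_)
    have ht : 0 < t := ht
    have := H_pos ht
    simp only [Pi.zero_apply]
    positivity

lemma K_pos {q : ℝ} (hq : 1 / 2 < q) : 0 < K q :=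
  (div_pos kappa_pos (by linarith)).trans_le (K_lower hq)

/-! ### Log-convexity -/

/-- Hölder's inequality for the moments, obtained by integrating the weighted AM-GM inequality for
the normalized densities `t^q H / K_q` and `t^r H / K_r`. -/
lemma K_holder {q r u v : ℝ} (hq : 1 / 2 < q) (hr : 1 / 2 < r) (hu : 0 ≤ u) (hv : 0 ≤ v)
    (huv : u + v = 1) : K (u * q + v * r) ≤ K q ^ u * K r ^ v := by
  have hA := K_pos hq
  have hB := K_pos hr
  have hs : 1 / 2 < u * q + v * r := by
    have : min q r ≤ u * q + v * r := by
      have h1 := mul_le_mul_of_nonneg_left (min_le_left q r) hu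
      have h2 := mul_le_mul_of_nonneg_left (min_le_right q r) hv
      have h3 : u * min q r + v * min q r = min q r := by rw [← add_mul, huv, one_mul]
      linarith
    exact (lt_min hq hr).trans_le this
  set P := K q ^ u * K r ^ v with hP
  have hPpos : 0 < P := by positivity
  have key : K (u * q + v * r) ≤
      ∫ t in Ioi (0 : ℝ), (P * u / K q * (t ^ q * H t) + P * v / K r * (t ^ r * H t)) := by
    refine setIntegral_mono_on (integrable_moment hs)
      (((integrable_moment hq).const_mul _).add ((integrable_moment hr).const_mul _))
      measurableSet_Ioi fun t ht => ?_
    have ht : 0 < t := ht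
    have hH := H_pos ht
    have am := geom_mean_le_arith_mean2_weighted (p₁ := t ^ q * H t / K q)
      (p₂ := t ^ r * H t / K r) hu hv (by positivity) (by positivity) huv
    have e : (t ^ q * H t / K q) ^ u * (t ^ r * H t / K r) ^ v
        = t ^ (u * q + v * r) * H t / P := by
      rw [div_rpow (by positivity) hA.le, div_rpow (by positivity) hB.le,
        mul_rpow (by positivity) hH.le, mul_rpow (by positivity) hH.le, ← rpow_mul ht.le,
        ← rpow_mul ht.le, rpow_add ht, mul_comm u q, mul_comm v r]
      have : H t ^ u * H t ^ v = H t := by rw [← rpow_add hH, huv, rpow_one]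
      rw [div_mul_div_comm, ← hP]
      congr 1
      linear_combination (t ^ (q * u) * t ^ (r * v)) * this
    rw [e, div_le_iff₀ hPpos] at am
    refine am.trans (le_of_eq ?_)
    ring
  rw [integral_add ((integrable_moment hq).const_mul _) ((integrable_moment hr).const_mul _),
    integral_const_mul, integral_const_mul] at key
  change K (u * q + v * r) ≤ P * u / K q * K q + P * v / K r * K r at key
  rw [div_mul_cancel₀ _ hA.ne', div_mul_cancel₀ _ hB.ne', ← mul_add, huv, mul_one] at key
  exact key

lemma a_pos {p : ℝ} (hp : 1 ≤ p) : 0 < a p := by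
  have := Gamma_pos_of_pos (s := (p + 1) / 2) (by linarith)
  unfold a
  positivity

lemma c_pos {p : ℝ} (hp : 1 < p) : 0 < c p := by
  have := K_pos (q := p / 2) (by linarith)
  have := a_pos hp.le
  unfold c
  positivity

lemma log_c {p : ℝ} (hp : 1 < p) :
    log (c p) = p / 2 * log 2 + log (Gamma ((p + 1) / 2)) + log (K (p / 2)) - log √π - log √2 := by
  have h1 := Gamma_pos_of_pos (s := (p + 1) / 2) (by linarith)
  have h2 := K_pos (q := p / 2) (by linarith)
  have h3 : (2 : ℝ) ^ (p / 2) ≠ 0 := by positivity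
  have h4 : √π ≠ 0 := by positivity
  have h5 : √2 ≠ 0 := by positivity
  unfold c a
  rw [log_div (by positivity) h5, log_mul (by positivity) h2.ne', log_div (by positivity) h4,
    log_mul h3 h1.ne', log_rpow (by norm_num)]
  ring

/-- `c` is a product of the exponential `2^{p/2}`, a Gamma function and a moment function, each of
which is log-convex. -/
lemma convexOn_log_c : ConvexOn ℝ (Ioi 1) (fun p => log (c p)) := by
  refine ⟨convex_Ioi 1, fun x hx y hy u v hu hv huv => ?_⟩
  have hz : 1 < u * x + v * y := convex_Ioi (1 : ℝ) hx hy hu hv huv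
  have hx : 1 < x := hx
  have hy : 1 < y := hy
  simp only [smul_eq_mul]
  rw [log_c hz, log_c hx, log_c hy]
  have hG := convexOn_log_Gamma.2 (x := (x + 1) / 2) (y := (y + 1) / 2)
    (mem_Ioi.2 (by linarith)) (mem_Ioi.2 (by linarith)) hu hv huv
  simp only [smul_eq_mul, Function.comp] at hG
  have e1 : u * ((x + 1) / 2) + v * ((y + 1) / 2) = (u * x + v * y + 1) / 2 := by
    linear_combination huv / 2
  rw [e1] at hG
  have hqx : 1 / 2 < x / 2 := by linarith
  have hqy : 1 / 2 < y / 2 := by linarith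
  have hK := K_holder hqx hqy hu hv huv
  have hA := K_pos hqx
  have hB := K_pos hqy
  have e2 : u * (x / 2) + v * (y / 2) = (u * x + v * y) / 2 := by ring
  rw [e2] at hK
  have hlog := log_le_log (K_pos (by linarith)) hK
  rw [log_mul (by positivity) (by positivity), log_rpow hA, log_rpow hB] at hlog
  have hs : ∀ s : ℝ, u * s + v * s = s := fun s => by rw [← add_mul, huv, one_mul]
  have h1 := hs (log √π)
  have h2 := hs (log √2)
  linarith

/-- For the convex function `m = log c`, the slope on `[p, p']` is at most the slope on
`[2p, 2p']`; as the second interval is twice as long, `m(2p) - 2 m(p)` is increasing. -/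
lemma ratio_mono {p p' : ℝ} (hp : 1 < p) (hpp : p < p') :
    c (2 * p) / c p ^ 2 ≤ c (2 * p') / c p' ^ 2 := by
  have hp' : 1 < p' := hp.trans hpp
  have hc := convexOn_log_c
  have h1 := hc.secant_mono (a := p) (x := p') (y := 2 * p') hp hp'
    (mem_Ioi.2 (by linarith)) hpp.ne' (by linarith) (by linarith)
  have h2 := hc.secant_mono (a := 2 * p') (x := p) (y := 2 * p) (mem_Ioi.2 (by linarith)) hp
    (mem_Ioi.2 (by linarith)) (by linarith) (by linarith) (by linarith)
  have c1 := c_pos hp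
  have c2 := c_pos hp'
  have c3 := c_pos (p := 2 * p) (by linarith)
  have c4 := c_pos (p := 2 * p') (by linarith)
  rw [← log_le_log_iff (by positivity) (by positivity), log_div c3.ne' (by positivity),
    log_div c4.ne' (by positivity), log_pow, log_pow]
  have e1 : (log (c p) - log (c (2 * p'))) / (p - 2 * p')
      = (log (c (2 * p')) - log (c p)) / (2 * p' - p) := by
    rw [← neg_sub, ← neg_sub (2 * p') p, neg_div_neg_eq]
  have e2 : (log (c (2 * p)) - log (c (2 * p'))) / (2 * p - 2 * p')
      = (log (c (2 * p')) - log (c (2 * p))) / 2 / (p' - p) := by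
    rw [← neg_sub, ← neg_sub (2 * p') (2 * p), neg_div_neg_eq, ← mul_sub, div_div]
  rw [e1, e2] at h2
  have h3 := h1.trans h2
  rw [div_le_div_iff_of_pos_right (by linarith)] at h3
  push_cast
  linarith

/-! ### The limit at `1` -/

lemma ratio_tendsto :
    Tendsto (fun p => c (2 * p) / c p ^ 2) (nhdsWithin 1 (Ioi 1)) (nhds 0) := by
  have hcont : ContinuousAt a 1 := by
    have hG : ContinuousAt Gamma (((1 : ℝ) + 1) / 2) :=
      (differentiableAt_Gamma fun m => by
        have : (0 : ℝ) ≤ m := m.cast_nonneg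
        intro h; linarith).continuousAt
    have hG' : ContinuousAt (fun p : ℝ => Gamma ((p + 1) / 2)) 1 :=
      ContinuousAt.comp (f := fun p : ℝ => (p + 1) / 2) hG (by fun_prop)
    have h2 : ContinuousAt (fun p : ℝ => (2 : ℝ) ^ (p / 2)) 1 :=
      (continuous_const.rpow (by fun_prop) (by norm_num)).continuousAt
    exact (h2.mul hG').div_const _
  have hc2 : ContinuousAt (fun p => c (2 * p)) 1 := by
    have h1 : ContinuousAt (fun p => log (c p)) (2 * 1) :=
      (convexOn_log_c.continuousOn isOpen_Ioi).continuousAt (Ioi_mem_nhds (by norm_num))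
    have h2 : ContinuousAt (fun p : ℝ => exp (log (c (2 * p)))) 1 :=
      (ContinuousAt.comp (f := fun p : ℝ => 2 * p) h1 (by fun_prop)).rexp
    refine h2.congr ?_
    filter_upwards [Ioi_mem_nhds (show (1 / 2 : ℝ) < 1 by norm_num)] with p hp
    have hp : 1 / 2 < p := hp
    exact exp_log (c_pos (by linarith))
  have ha1 : a 1 ≠ 0 := (a_pos le_rfl).ne'
  have hk := kappa_pos
  -- the bound `c p ≥ a p * (2 κ / (p - 1)) / √2` turns the ratio into this explicit function
  have hlim : ContinuousAt
      (fun p => c (2 * p) * ((p - 1) * √2 / (2 * kappa * a p)) ^ 2) 1 := by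
    refine hc2.mul (ContinuousAt.pow (ContinuousAt.div (by fun_prop) (by fun_prop) ?_) 2)
    positivity
  have h0 : c (2 * 1) * (((1 : ℝ) - 1) * √2 / (2 * kappa * a 1)) ^ 2 = 0 := by simp
  have hlim' := hlim.tendsto
  rw [h0] at hlim'
  refine tendsto_of_tendsto_of_tendsto_of_le_of_le' tendsto_const_nhds
    (hlim'.mono_left nhdsWithin_le_nhds) ?_ ?_
  · filter_upwards [self_mem_nhdsWithin] with p hp
    have hp : 1 < p := hp
    have c1 := c_pos hp
    have c3 := c_pos (p := 2 * p) (by linarith)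
    positivity
  · filter_upwards [self_mem_nhdsWithin] with p hp
    have hp : 1 < p := hp
    have c3 := c_pos (p := 2 * p) (by linarith)
    have hap := a_pos hp.le
    have hp1 : 0 < p - 1 := by linarith
    have hKl := K_lower (q := p / 2) (by linarith)
    have hlow : ((p - 1) * √2 / (2 * kappa * a p))⁻¹ ≤ c p := by
      have e : ((p - 1) * √2 / (2 * kappa * a p))⁻¹ = a p * (kappa / (p / 2 - 1 / 2)) / √2 := by
        have : p / 2 - 1 / 2 = (p - 1) / 2 := by ring
        rw [this]
        field_simp
      rw [e]
      unfold c
      gcongr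
    have hpos : 0 < (p - 1) * √2 / (2 * kappa * a p) := by positivity
    have := inv_le_of_inv_le₀ hpos hlow
    rw [div_eq_mul_inv, ← inv_pow]
    have c1 := c_pos hp
    gcongr

/-! ### The exact moments `K 1` and `K 2` -/

lemma sin_pos' {x : ℝ} (hx : x ∈ Ioo 0 (π / 2)) : 0 < sin x :=
  sin_pos_of_pos_of_lt_pi hx.1 (by linarith [hx.2, pi_pos])

lemma cos_pos' {x : ℝ} (hx : x ∈ Ioo 0 (π / 2)) : 0 < cos x :=
  cos_pos_of_mem_Ioo ⟨by linarith [hx.1, pi_pos], hx.2⟩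

lemma hasDerivAt_log_sin {x : ℝ} (hx : x ∈ Ioo 0 (π / 2)) :
    HasDerivAt (fun y => log (sin y)) (cos x / sin x) x :=
  (hasDerivAt_sin x).log (sin_pos' hx).ne'

lemma image_neg_log_sin : image (fun x => -log (sin x)) (Ioo 0 (π / 2)) = Ioi 0 := by
  ext t
  constructor
  · rintro ⟨x, hx, rfl⟩
    have hs := sin_pos' hx
    have hc := cos_pos' hx
    have : sin x < 1 := by nlinarith [sin_sq_add_cos_sq x]
    exact neg_pos.2 (log_neg hs this)
  · intro ht
    have ht : 0 < t := ht
    have h1 : exp (-t) < 1 := exp_lt_one_iff.2 (by linarith)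
    refine ⟨arcsin (exp (-t)), ⟨arcsin_pos.2 (exp_pos _), arcsin_lt_pi_div_two.2 h1⟩, ?_⟩
    simp only
    rw [sin_arcsin (by linarith [exp_pos (-t)]) h1.le, log_exp, neg_neg]

lemma neg_log_sin_pos {x : ℝ} (hx : x ∈ Ioo 0 (π / 2)) : 0 < -log (sin x) := by
  have h := mem_image_of_mem (fun x => -log (sin x)) hx
  rw [image_neg_log_sin] at h
  exact h

lemma injOn_neg_log_sin : InjOn (fun x => -log (sin x)) (Ioo 0 (π / 2)) := by
  intro x hx y hy h
  have h2 := log_injOn_pos (sin_pos' hx) (sin_pos' hy) (neg_injective h)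
  exact injOn_sin ⟨by linarith [hx.1, pi_pos], hx.2.le⟩ ⟨by linarith [hy.1, pi_pos], hy.2.le⟩ h2

/-- The substitution `t = -log (sin x)` turns `H t dt` into `(2√2/π) sec² x dx`. -/
lemma substitution {x : ℝ} (q : ℝ) (hx : x ∈ Ioo 0 (π / 2)) :
    |-(cos x / sin x)| • ((-log (sin x)) ^ q * H (-log (sin x)))
      = 2 * √2 / π * ((-log (sin x)) ^ q / cos x ^ 2) := by
  have hs := sin_pos' hx
  have hc := cos_pos' hx
  have ht : 0 < -log (sin x) := neg_log_sin_pos hx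
  have e1 : 1 - exp (-2 * -log (sin x)) = cos x ^ 2 := by
    rw [show -2 * -log (sin x) = log (sin x) + log (sin x) by ring, exp_add, exp_log hs]
    linarith [sin_sq_add_cos_sq x]
  have e2 : (cos x ^ 2) ^ (-(3 / 2) : ℝ) = (cos x ^ 3)⁻¹ := by
    rw [← rpow_natCast, ← rpow_natCast, ← rpow_mul hc.le, ← rpow_neg hc.le]
    norm_num
  rw [H_eq ht, e1, e2, neg_neg, exp_log hs, abs_neg, abs_of_pos (by positivity), smul_eq_mul]
  field_simp

lemma trig_integrable {q : ℝ} (hq : 1 / 2 < q) :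
    IntervalIntegrable (fun x => (-log (sin x)) ^ q / cos x ^ 2) volume 0 (π / 2) := by
  rw [intervalIntegrable_iff_integrableOn_Ioo_of_le (by positivity)]
  have h := integrable_moment hq
  rw [← image_neg_log_sin, integrableOn_image_iff_integrableOn_abs_deriv_smul measurableSet_Ioo
    (f' := fun x => -(cos x / sin x))
    (fun x hx => (hasDerivAt_log_sin hx).fun_neg.hasDerivWithinAt) injOn_neg_log_sin] at h
  have h2 := (h.congr_fun (fun x hx => substitution q hx) measurableSet_Ioo).const_mul
    (2 * √2 / π)⁻¹
  refine h2.congr (Eventually.of_forall fun x => ?_)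
  simp only
  rw [inv_mul_cancel_left₀ (by positivity)]

lemma K_eq_trig (q : ℝ) :
    K q = 2 * √2 / π * ∫ x in (0 : ℝ)..(π / 2), (-log (sin x)) ^ q / cos x ^ 2 := by
  unfold K
  rw [← image_neg_log_sin, integral_image_eq_integral_abs_deriv_smul measurableSet_Ioo
    (f' := fun x => -(cos x / sin x))
    (fun x hx => (hasDerivAt_log_sin hx).fun_neg.hasDerivWithinAt) injOn_neg_log_sin,
    setIntegral_congr_fun measurableSet_Ioo (fun x hx => substitution q hx), integral_const_mul,
    intervalIntegral.integral_of_le (by positivity), integral_Ioc_eq_integral_Ioo]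

lemma tendsto_tan_log_sq_zero :
    Tendsto (fun x => tan x * log (sin x) ^ 2) (nhdsWithin 0 (Ioi 0)) (nhds 0) := by
  have hs : Tendsto sin (nhdsWithin 0 (Ioi 0)) (nhdsWithin 0 (Ioi 0)) := by
    refine tendsto_nhdsWithin_iff.2 ⟨?_, ?_⟩
    · simpa using (continuous_sin.tendsto 0).mono_left nhdsWithin_le_nhds
    · filter_upwards [Ioo_mem_nhdsGT (show (0 : ℝ) < π / 2 by positivity)] with x hx
      exact sin_pos' hx
  have h1 := ((tendsto_log_mul_rpow_nhdsGT_zero (r := 1 / 2) (by norm_num)).comp hs).pow 2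
  have hc : Tendsto cos (nhdsWithin 0 (Ioi 0)) (nhds 1) := by
    simpa using (continuous_cos.tendsto 0).mono_left nhdsWithin_le_nhds
  have h2 := h1.div hc one_ne_zero
  norm_num at h2
  refine h2.congr' ?_
  filter_upwards [Ioo_mem_nhdsGT (show (0 : ℝ) < π / 2 by positivity)] with x hx
  have : (sin x ^ (1 / 2 : ℝ)) ^ 2 = sin x := by
    rw [← rpow_natCast, ← rpow_mul (sin_pos' hx).le]; norm_num
  simp only [Pi.div_apply, tan_eq_sin_div_cos]
  rw [mul_pow, this]
  ring

lemma tendsto_tan_log_zero :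
    Tendsto (fun x => tan x * log (sin x)) (nhdsWithin 0 (Ioi 0)) (nhds 0) := by
  have hcont : ContinuousAt (fun x => sin x * log (sin x) / cos x) 0 := by
    refine ContinuousAt.div ?_ continuous_cos.continuousAt (by simp)
    exact (continuous_mul_log.comp continuous_sin).continuousAt
  have h := hcont.tendsto.mono_left (nhdsWithin_le_nhds (s := Ioi 0))
  simp only [sin_zero, zero_mul, zero_div] at h
  refine h.congr fun x => ?_
  rw [tan_eq_sin_div_cos]
  ring

/-- Near `π/2`, `|log (sin x)| ≤ 1 / sin x - 1 ≤ cos² x / sin x`, so `|tan x log (sin x)| ≤ cos x`. -/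
lemma tendsto_tan_log_pi_div_two :
    Tendsto (fun x => tan x * log (sin x)) (nhdsWithin (π / 2) (Iio (π / 2))) (nhds 0) := by
  have hc : Tendsto cos (nhdsWithin (π / 2) (Iio (π / 2))) (nhds 0) := by
    simpa using (continuous_cos.tendsto (π / 2)).mono_left nhdsWithin_le_nhds
  refine squeeze_zero_norm' ?_ hc
  filter_upwards [Ioo_mem_nhdsLT (show (0 : ℝ) < π / 2 by positivity)] with x hx
  have hs := sin_pos' hx
  have hcx := cos_pos' hx
  have h1 : 0 < -log (sin x) := neg_log_sin_pos hx
  have h2 := one_sub_inv_le_log_of_pos hs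
  have h3 : -log (sin x) ≤ cos x ^ 2 / sin x := by
    have : (sin x)⁻¹ - 1 ≤ cos x ^ 2 / sin x := by
      rw [le_div_iff₀ hs, sub_mul, inv_mul_cancel₀ hs.ne']
      nlinarith [sin_sq_add_cos_sq x, sin_le_one x]
    linarith
  rw [norm_mul, norm_of_nonpos (by linarith : log (sin x) ≤ 0), tan_eq_sin_div_cos,
    norm_of_nonneg (by positivity)]
  calc sin x / cos x * -log (sin x) ≤ sin x / cos x * (cos x ^ 2 / sin x) := by gcongr
    _ = cos x := by field_simp

lemma hasDerivAt_tan' {x : ℝ} (hx : x ∈ Ioo 0 (π / 2)) : HasDerivAt tan (1 / cos x ^ 2) x :=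
  hasDerivAt_tan (ne_of_gt (cos_pos' hx))

/-- `x - tan x log (sin x)` is an antiderivative of `-log (sin x) / cos² x`. -/
lemma K_one : K 1 = √2 := by
  rw [K_eq_trig]
  have hint := trig_integrable (q := 1) (by norm_num)
  have h : ∫ x in (0 : ℝ)..(π / 2), (-log (sin x)) ^ (1 : ℝ) / cos x ^ 2
      = (π / 2 - 0) - (0 - 0) := by
    refine intervalIntegral.integral_eq_sub_of_hasDerivAt_of_tendsto
      (f := fun x => x - tan x * log (sin x)) (by positivity) (fun x hx => ?_) hint
      ((tendsto_id.mono_left nhdsWithin_le_nhds).sub tendsto_tan_log_zero)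
      ((tendsto_id.mono_left nhdsWithin_le_nhds).sub tendsto_tan_log_pi_div_two)
    have hs := (sin_pos' hx).ne'
    have hc := (cos_pos' hx).ne'
    refine ((hasDerivAt_id x).sub
      ((hasDerivAt_tan' hx).mul (hasDerivAt_log_sin hx))).congr_deriv ?_
    rw [rpow_one, tan_eq_sin_div_cos]
    field_simp
    ring
  rw [h]
  field_simp
  ring

/-- `tan x log² (sin x)` has derivative `log² (sin x) / cos² x + 2 log (sin x)`, so the moment
reduces to Euler's integral of `log (sin x)`. -/
lemma K_two : K 2 = 2 * √2 * log 2 := by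
  rw [K_eq_trig]
  have hint := trig_integrable (q := 2) (by norm_num)
  have hint2 : IntervalIntegrable (fun x => 2 * log (sin x)) volume 0 (π / 2) :=
    (intervalIntegrable_log_sin (a := 0) (b := π / 2)).const_mul 2
  have hlog : Tendsto (fun x => log (sin x)) (nhdsWithin (π / 2) (Iio (π / 2))) (nhds 0) := by
    have : ContinuousAt (fun x => log (sin x)) (π / 2) :=
      continuous_sin.continuousAt.log (by simp)
    simpa using this.tendsto.mono_left nhdsWithin_le_nhds
  have hend : Tendsto (fun x => tan x * log (sin x) ^ 2)
      (nhdsWithin (π / 2) (Iio (π / 2))) (nhds 0) := by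
    have := tendsto_tan_log_pi_div_two.mul hlog
    rw [zero_mul] at this
    exact this.congr fun x => by ring
  have h : ∫ x in (0 : ℝ)..(π / 2), ((-log (sin x)) ^ (2 : ℝ) / cos x ^ 2 + 2 * log (sin x))
      = 0 - 0 := by
    refine intervalIntegral.integral_eq_sub_of_hasDerivAt_of_tendsto
      (f := fun x => tan x * log (sin x) ^ 2) (by positivity) (fun x hx => ?_)
      (hint.add hint2) tendsto_tan_log_sq_zero hend
    have hs := (sin_pos' hx).ne'
    have hc := (cos_pos' hx).ne'
    refine ((hasDerivAt_tan' hx).mul ((hasDerivAt_log_sin hx).pow 2)).congr_deriv ?_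
    simp only [Pi.pow_apply]
    rw [rpow_two, tan_eq_sin_div_cos]
    field_simp
    norm_num
    ring
  rw [intervalIntegral.integral_add hint hint2, intervalIntegral.integral_const_mul,
    integral_log_sin_zero_pi_div_two] at h
  have h' : ∫ x in (0 : ℝ)..(π / 2), (-log (sin x)) ^ (2 : ℝ) / cos x ^ 2 = π * log 2 := by
    linarith
  rw [h']
  field_simp

lemma a_two : a 2 = 1 := by
  have hG : Gamma (((2 : ℝ) + 1) / 2) = √π / 2 := by
    rw [show ((2 : ℝ) + 1) / 2 = 1 / 2 + 1 by norm_num, Gamma_add_one (by norm_num),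
      Gamma_one_half_eq]
    ring
  have : √π ≠ 0 := by positivity
  unfold a
  rw [hG]
  norm_num
  field_simp

lemma a_four : a 4 = 3 := by
  have hG : Gamma (((4 : ℝ) + 1) / 2) = 3 * √π / 4 := by
    rw [show ((4 : ℝ) + 1) / 2 = 1 / 2 + 1 + 1 by norm_num, Gamma_add_one (by norm_num),
      Gamma_add_one (by norm_num), Gamma_one_half_eq]
    ring
  have : √π ≠ 0 := by positivity
  have h2 : (2 : ℝ) ^ ((4 : ℝ) / 2) = 4 := by
    rw [show (4 : ℝ) / 2 = 2 by norm_num, rpow_two]; norm_num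
  unfold a
  rw [hG, h2]
  field_simp

/-- The upper bound is attained at the right end point. -/
lemma E_two : E 2 = 10 * log 2 := by
  have h : √2 ≠ 0 := by positivity
  have c2 : c 2 = 1 := by
    unfold c
    rw [a_two, div_self (by norm_num : (2 : ℝ) ≠ 0), K_one]
    field_simp
  have c4 : c (2 * 2) = 6 * log 2 := by
    unfold c
    rw [show (2 : ℝ) * 2 = 4 by norm_num, a_four, show (4 : ℝ) / 2 = 2 by norm_num, K_two]
    field_simp
    norm_num
  unfold E
  rw [c2, c4]
  ring

/-- `E` is monotone increasing on `(1, 2]`, tends to `4 log 2` as `p → 1+`, and satisfies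
`4 log 2 ≤ E(p) ≤ 10 log 2` on `(1, 2]`. -/
theorem E_monotone_and_bounds :
    MonotoneOn E (Ioc (1 : ℝ) 2) ∧
      Tendsto E (nhdsWithin 1 (Ioi 1)) (nhds (4 * Real.log 2)) ∧
      ∀ p ∈ Ioc (1 : ℝ) 2, 4 * Real.log 2 ≤ E p ∧ E p ≤ 10 * Real.log 2 := by
  have hmono : MonotoneOn E (Ioc (1 : ℝ) 2) := by
    intro x hx y _ hxy
    rcases hxy.eq_or_lt with rfl | hlt
    · exact le_rfl
    · exact add_le_add_left (ratio_mono hx.1 hlt) _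
  refine ⟨hmono, ?_, fun p hp => ⟨?_, ?_⟩⟩
  · have := ratio_tendsto.add_const (4 * log 2)
    rwa [zero_add] at this
  · have c1 := c_pos hp.1
    have c3 := c_pos (p := 2 * p) (by linarith [hp.1])
    have : 0 ≤ c (2 * p) / c p ^ 2 := by positivity
    unfold E
    linarith
  · rw [← E_two]
    exact hmono hp ⟨by norm_num, le_rfl⟩ hp.2
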